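/- arXiv:1311.6484 — 5 statements merged into one kernel-verified Lean document; each statement's English description precedes it below -/
import Mathlib

section
/- There exist no three positive integers which are consecutive terms of an arithmetic progression and whose sum of squares is a perfect square. Precisely: for all positive integers n and d, there is no positive integer t with n² + (n + d)² + (n + 2d)² = t². -/
/-!
With middle term `m = n + d`, the sum of squares is `3 * m ^ 2 + 2 * d ^ 2`. Since `2` is not a
square modulo `3`, an equation `3 * m ^ 2 + 2 * d ^ 2 = t ^ 2` forces `3` to divide `d` and `t`,
hence `9 ∣ 3 * m ^ 2` and `3 ∣ m`. Dividing all three by `3` gives a smaller solution, so infinite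
descent on `d` leaves only `d = 0`.
-/

theorem eq_zero_of_three_mul_sq_add_two_mul_sq (d : ℕ) :
    ∀ m t : ℕ, 3 * m ^ 2 + 2 * d ^ 2 = t ^ 2 → d = 0 := by
  induction d using Nat.strong_induction_on with
  | _ d ih =>
    intro m t h
    have hmod : d % 3 = 0 ∧ t % 3 = 0 := by
      have h3 : (3 * m ^ 2 + 2 * d ^ 2) % 3 = t ^ 2 % 3 := by rw [h]
      have : d % 3 = 0 ∨ d % 3 = 1 ∨ d % 3 = 2 := by omega
      have : t % 3 = 0 ∨ t % 3 = 1 ∨ t % 3 = 2 := by omega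
      rcases ‹d % 3 = 0 ∨ _› with hd | hd | hd <;> rcases ‹t % 3 = 0 ∨ _› with ht | ht | ht <;>
        simp [Nat.add_mod, Nat.mul_mod, Nat.pow_mod, hd, ht] at h3 ⊢
    obtain ⟨a, rfl⟩ := Nat.dvd_of_mod_eq_zero hmod.1
    obtain ⟨b, rfl⟩ := Nat.dvd_of_mod_eq_zero hmod.2
    have hm : 3 ∣ m := by
      refine Nat.prime_three.dvd_of_dvd_pow (n := 2) ?_
      have h' : m ^ 2 + 6 * a ^ 2 = 3 * b ^ 2 := by nlinarith
      omega
    obtain ⟨c, rfl⟩ := hm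
    by_contra hne
    have := ih a (by omega) c b (by nlinarith)
    omega

theorem sum_sq_three_ap_not_square (n d : ℕ) (hn : 0 < n) (hd : 0 < d) :
    ¬ ∃ t : ℕ, 0 < t ∧ n ^ 2 + (n + d) ^ 2 + (n + 2 * d) ^ 2 = t ^ 2 := by
  rintro ⟨t, -, h⟩
  have := eq_zero_of_three_mul_sq_add_two_mul_sq d (n + d) t (by rw [← h]; ring)
  omega
end

section
/- Let p be a prime with p ≥ 5 such that 3 is a quadratic non-residue of p. Then there exist no p positive integers which are consecutive terms of an arithmetic progression and whose sum of squares is a perfect square. Precisely: for all positive integers n, d, there is no positive integer t with Σ_{i=0}^{p−1} (n + i·d)² = t². -/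
/-!
With `M = 2n + (p-1)d` (twice the middle term), the sum of squares `S` satisfies
`12 S = p (3 M² + (p² - 1) d²)`. If `S = t²`, then `p ∣ t`, say `t = p s`, and
`3 M² + (p² - 1) d² = 12 p s²`, so `3 M² ≡ d²` modulo `p`. As `3` is a non-residue this forces
`p ∣ M` and `p ∣ d`. Dividing these out, `(M / p, d / p, s)` solves the equation that `(M, d, t)`
solves, so infinite descent on `d` gives `d = 0`.
-/

/-- If `3` is a non-residue of `p`, the form `3 x² - y²` is anisotropic modulo `p`. -/
lemma dvd_of_three_nonresidue (p : ℕ) [Fact p.Prime]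
    (h3 : ¬ ∃ x : ℤ, x ^ 2 ≡ 3 [ZMOD (p : ℤ)])
    (M d : ℤ) (h : (p : ℤ) ∣ 3 * M ^ 2 - d ^ 2) : (p : ℤ) ∣ M ∧ (p : ℤ) ∣ d := by
  have e : (3 * (M : ZMod p) ^ 2 - (d : ZMod p) ^ 2) = 0 := by
    have := (ZMod.intCast_zmod_eq_zero_iff_dvd _ p).2 h
    push_cast at this
    exact this
  have hM : (M : ZMod p) = 0 := by
    by_contra hM
    apply h3
    obtain ⟨x, hx⟩ := ZMod.intCast_surjective ((d : ZMod p) / (M : ZMod p))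
    refine ⟨x, (ZMod.intCast_eq_intCast_iff _ _ p).1 ?_⟩
    push_cast
    rw [hx]
    field_simp
    linear_combination -e
  have hd : (d : ZMod p) = 0 := by
    rw [hM] at e
    simpa using e
  exact ⟨(ZMod.intCast_zmod_eq_zero_iff_dvd _ p).1 hM, (ZMod.intCast_zmod_eq_zero_iff_dvd _ p).1 hd⟩

/-- The infinite descent, by strong induction on a bound `N` for `|d|`. -/
lemma eq_zero_of_descent (p : ℕ) (hp : p.Prime) (hp5 : 5 ≤ p)
    (h3 : ¬ ∃ x : ℤ, x ^ 2 ≡ 3 [ZMOD (p : ℤ)]) (N : ℕ) :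
    ∀ M d t : ℤ, d.natAbs ≤ N →
      (p : ℤ) * (3 * M ^ 2 + ((p : ℤ) ^ 2 - 1) * d ^ 2) = 12 * t ^ 2 → d = 0 := by
  have := Fact.mk hp
  have hpZ : Prime (p : ℤ) := Nat.prime_iff_prime_int.1 hp
  have hp0 : (p : ℤ) ≠ 0 := hpZ.ne_zero
  induction N with
  | zero => intro M d t hd _; omega
  | succ N ih =>
    intro M d t hd h
    have hp12 : ¬ (p : ℤ) ∣ 12 := by
      intro hdiv
      have hle : p ∣ 12 := by exact_mod_cast hdiv
      have := Nat.le_of_dvd (by norm_num) hle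
      interval_cases p <;> revert hp hle <;> decide
    have ht : (p : ℤ) ∣ t :=
      hpZ.dvd_of_dvd_pow ((hpZ.dvd_or_dvd (Dvd.intro _ h)).resolve_left hp12)
    obtain ⟨s, rfl⟩ := ht
    have h' : 3 * M ^ 2 + ((p : ℤ) ^ 2 - 1) * d ^ 2 = 12 * p * s ^ 2 := by
      apply mul_left_cancel₀ hp0
      linear_combination h
    obtain ⟨⟨M', rfl⟩, ⟨d', rfl⟩⟩ := dvd_of_three_nonresidue p h3 M d
      ⟨12 * s ^ 2 - p * d ^ 2, by linear_combination h'⟩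
    have key : (p : ℤ) * (3 * M' ^ 2 + ((p : ℤ) ^ 2 - 1) * d' ^ 2) = 12 * s ^ 2 := by
      apply mul_left_cancel₀ hp0
      linear_combination h'
    rw [Int.natAbs_mul, Int.natAbs_natCast] at hd
    have := ih M' d' s (by nlinarith) key
    simp [this]

/-- The closed form of the sum, for any number `k` of terms. -/
lemma twelve_mul_sum_sq (n d : ℤ) (k : ℕ) :
    12 * ∑ i ∈ Finset.range k, (n + i * d) ^ 2 =
      k * (3 * (2 * n + (k - 1) * d) ^ 2 + ((k : ℤ) ^ 2 - 1) * d ^ 2) := by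
  induction k with
  | zero => simp
  | succ k ih =>
    rw [Finset.sum_range_succ, mul_add, ih]
    push_cast
    ring

theorem sum_sq_p_ap_not_square_of_three_nonresidue (p : ℕ) (hp : p.Prime)
    (hp5 : 5 ≤ p) (h3 : ¬ ∃ x : ℤ, x ^ 2 ≡ 3 [ZMOD (p : ℤ)])
    (n d : ℕ) (hn : 0 < n) (hd : 0 < d) :
    ¬ ∃ t : ℕ, 0 < t ∧ ∑ i ∈ Finset.range p, (n + i * d) ^ 2 = t ^ 2 := by
  rintro ⟨t, -, ht⟩
  have htZ : ∑ i ∈ Finset.range p, ((n : ℤ) + i * d) ^ 2 = (t : ℤ) ^ 2 := by exact_mod_cast ht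
  have hsum := twelve_mul_sum_sq n d p
  rw [htZ] at hsum
  have := eq_zero_of_descent p hp hp5 h3 _ _ d t le_rfl hsum.symm
  omega
end

section
/- Let p be a prime with p ≥ 5 such that 3 is a quadratic non-residue of p. Then the equation 6p·n² + 6p(p−1)·n·d + p(p−1)(2p−1)·d² = 6t² has no solutions in positive integers n, d, t. -/
/-!
The proof is an infinite descent on `n`. The left side is a multiple of `p`, so `p ∣ t`. Writing
`t = p s` and cancelling one factor `p` leaves `6n² - 6nd + d² ≡ 0 (mod p)`, and six times the
left side is `(6n - 3d)² - 3d²`. As `3` is not a square mod `p`, this forces `p ∣ d` and then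
`p ∣ n` (`dvd_of_sq_sub_three_sq`, `dvd_all_of_eq`). The equation being homogeneous, `(n, d, t)`
may be divided by `p`, and this cannot go on forever when `n > 0`.
-/

/-- If `3` is not a square mod `p`, the form `a² - 3b²` is anisotropic mod `p`; only the
divisibility of `b` is recorded. -/
lemma dvd_of_sq_sub_three_sq (p : ℕ) (hp : p.Prime)
    (h3 : ¬ ∃ x : ℤ, x ^ 2 ≡ 3 [ZMOD (p : ℤ)]) (a b : ℤ)
    (h : (p : ℤ) ∣ a ^ 2 - 3 * b ^ 2) : (p : ℤ) ∣ b := by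
  by_contra hb
  obtain ⟨u, v, huv⟩ : IsCoprime (p : ℤ) b :=
    (Nat.prime_iff_prime_int.mp hp).coprime_iff_not_dvd.mpr hb
  obtain ⟨k, hk⟩ := h
  -- `v` is an inverse of `b` mod `p`, so `a * v` would be a square root of `3`.
  refine h3 ⟨a * v, (Int.modEq_iff_dvd.mpr ⟨v ^ 2 * k - 3 * u * (1 + v * b), ?_⟩).symm⟩
  linear_combination v ^ 2 * hk + 3 * (1 + v * b) * huv

/-- The divisibility step of the descent, with the equation read in `ℤ`. -/
lemma dvd_all_of_eq (p : ℕ) (hp : p.Prime) (hp5 : 5 ≤ p)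
    (h3 : ¬ ∃ x : ℤ, x ^ 2 ≡ 3 [ZMOD (p : ℤ)]) (n d t : ℤ)
    (h : 6 * p * n ^ 2 + 6 * p * (p - 1) * n * d + p * (p - 1) * (2 * p - 1) * d ^ 2
      = 6 * t ^ 2) : (p : ℤ) ∣ n ∧ (p : ℤ) ∣ d ∧ (p : ℤ) ∣ t := by
  have hP : Prime (p : ℤ) := Nat.prime_iff_prime_int.mp hp
  have h6 : ¬ (p : ℤ) ∣ 6 := by
    intro h
    have h' : p ∣ 2 * 3 := by exact_mod_cast h
    rcases hp.dvd_mul.mp h' with h | h <;> have := Nat.le_of_dvd (by norm_num) h <;> omega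
  have ht : (p : ℤ) ∣ t := by
    have : (p : ℤ) ∣ 6 * t ^ 2 :=
      ⟨6 * n ^ 2 + 6 * (p - 1) * n * d + (p - 1) * (2 * p - 1) * d ^ 2, by
        linear_combination -h⟩
    exact hP.dvd_of_dvd_pow ((hP.dvd_or_dvd this).resolve_left h6)
  obtain ⟨s, rfl⟩ := ht
  have hs : 6 * n ^ 2 + 6 * (p - 1) * n * d + (p - 1) * (2 * p - 1) * d ^ 2
      = 6 * p * s ^ 2 := by
    apply mul_left_cancel₀ hP.ne_zero
    linear_combination h
  have hd : (p : ℤ) ∣ d :=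
    dvd_of_sq_sub_three_sq p hp h3 (6 * n - 3 * d) d
      ⟨6 * (6 * s ^ 2 - 6 * n * d - (2 * p - 3) * d ^ 2), by linear_combination 6 * hs⟩
  have hn : (p : ℤ) ∣ n := by
    obtain ⟨e, rfl⟩ := hd
    have : (p : ℤ) ∣ 6 * n ^ 2 :=
      ⟨6 * s ^ 2 - 6 * (p - 1) * n * e - (p - 1) * (2 * p - 1) * p * e ^ 2, by
        linear_combination hs⟩
    exact hP.dvd_of_dvd_pow ((hP.dvd_or_dvd this).resolve_left h6)
  exact ⟨hn, hd, dvd_mul_right _ _⟩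

theorem no_pos_sol_six_p_eq (p : ℕ) (hp : p.Prime) (hp5 : 5 ≤ p)
    (h3 : ¬ ∃ x : ℤ, x ^ 2 ≡ 3 [ZMOD (p : ℤ)]) :
    ¬ ∃ n d t : ℕ, 0 < n ∧ 0 < d ∧ 0 < t ∧
      6 * p * n ^ 2 + 6 * p * (p - 1) * n * d + p * (p - 1) * (2 * p - 1) * d ^ 2
        = 6 * t ^ 2 := by
  have descent : ∀ n : ℕ, 0 < n → ∀ d t : ℤ,
      6 * (p : ℤ) * (n : ℤ) ^ 2 + 6 * p * (p - 1) * n * d + p * (p - 1) * (2 * p - 1) * d ^ 2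
        ≠ 6 * t ^ 2 := by
    intro n
    induction n using Nat.strong_induction_on with
    | _ n ih =>
      intro hn d t h
      obtain ⟨h1, ⟨e, rfl⟩, ⟨s, rfl⟩⟩ := dvd_all_of_eq p hp hp5 h3 n d t h
      obtain ⟨m, rfl⟩ := Int.natCast_dvd_natCast.mp h1
      have hm : 0 < m := Nat.pos_of_mul_pos_left hn
      refine ih m (by nlinarith) hm e s ?_
      have hp0 : (p : ℤ) ^ 2 ≠ 0 := pow_ne_zero 2 (by exact_mod_cast hp.ne_zero)
      apply mul_left_cancel₀ hp0
      push_cast at h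
      linear_combination h
  rintro ⟨n, d, t, hn, -, -, h⟩
  apply descent n hn d t
  -- `p ≥ 1` makes the natural-number subtractions in the statement genuine.
  zify [show 1 ≤ p by omega, show 1 ≤ 2 * p by omega] at h
  exact h
end

section
/- Let p be a prime with p ≥ 5, and suppose positive integers n, d, t satisfy 6p·n² + 6p(p−1)·n·d + p(p−1)(2p−1)·d² = 6t². Then the p-adic valuations of n and d are equal, i.e., the highest power of p dividing n equals the highest power of p dividing d. -/
/-!
Write the equation as `p * Q = 6 * t ^ 2`, where
`Q = 6 n² + 6 (p - 1) n d + (p - 1) (2 p - 1) d²`. Since `p ∤ 6`, the right-hand side has even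
`p`-adic valuation, so `Q` has odd valuation. The outer coefficients `6` and `(p - 1) (2 p - 1)` of
`Q` are prime to `p`, so if the valuations of `n` and `d` differ, the square of the variable with
the smaller valuation `a` dominates, and `Q` has valuation `2 a`, which is even: a contradiction.
-/

lemma not_dvd_six {p : ℕ} (hp : p.Prime) (hp5 : 5 ≤ p) : ¬ p ∣ 6 := by
  intro h6
  have := Nat.le_of_dvd (by norm_num) h6
  interval_cases p
  · norm_num at h6
  · norm_num at hp

/-- Parity of valuations: the left-hand side has odd `p`-adic valuation, the right-hand side an
even one, because `p ∤ 6`. -/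
lemma odd_val_ne_six_mul_sq {p : ℕ} (hp : p.Prime) (hp5 : 5 ≤ p) {t : ℕ} (ht : 0 < t) (a m : ℕ)
    (hm : ¬ p ∣ m) : p ^ (2 * a + 1) * m ≠ 6 * t ^ 2 := by
  intro h
  have := Fact.mk hp
  have h6 := not_dvd_six hp hp5
  have hm0 : m ≠ 0 := by rintro rfl; simp at hm
  have hv := congrArg (padicValNat p) h
  rw [padicValNat.mul (pow_ne_zero _ hp.ne_zero) hm0, padicValNat.mul (by norm_num) (by positivity),
    padicValNat.prime_pow, padicValNat.pow, padicValNat.eq_zero_of_not_dvd hm,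
    padicValNat.eq_zero_of_not_dvd h6] at hv
  omega

theorem padic_val_eq_of_six_p_eq (p : ℕ) (hp : p.Prime) (hp5 : 5 ≤ p)
    (n d t : ℕ) (hn : 0 < n) (hd : 0 < d) (ht : 0 < t)
    (heq : 6 * p * n ^ 2 + 6 * p * (p - 1) * n * d + p * (p - 1) * (2 * p - 1) * d ^ 2
      = 6 * t ^ 2) :
    padicValNat p n = padicValNat p d := by
  have := Fact.mk hp
  have h6 := not_dvd_six hp hp5
  have hq : ¬ p ∣ p - 1 := Nat.not_dvd_of_pos_of_lt (by omega) (by omega)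
  have hr : ¬ p ∣ 2 * p - 1 := by
    intro h
    have h1 := Nat.dvd_sub (Dvd.intro_left 2 rfl : p ∣ 2 * p) h
    rw [show 2 * p - (2 * p - 1) = 1 by omega] at h1
    exact hp.one_lt.ne' (Nat.dvd_one.mp h1)
  generalize p - 1 = q at *
  generalize 2 * p - 1 = r at *
  obtain ⟨a, x, hx, rfl⟩ := Nat.exists_eq_pow_mul_and_not_dvd hn.ne' p hp.ne_one
  obtain ⟨b, y, hy, rfl⟩ := Nat.exists_eq_pow_mul_and_not_dvd hd.ne' p hp.ne_one
  have hx0 : x ≠ 0 := by rintro rfl; simp at hx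
  have hy0 : y ≠ 0 := by rintro rfl; simp at hy
  rw [padicValNat.mul (pow_ne_zero _ hp.ne_zero) hx0, padicValNat.mul (pow_ne_zero _ hp.ne_zero) hy0,
    padicValNat.prime_pow, padicValNat.prime_pow, padicValNat.eq_zero_of_not_dvd hx,
    padicValNat.eq_zero_of_not_dvd hy]
  rcases lt_trichotomy a b with hab | hab | hab
  · exfalso
    obtain ⟨c, rfl⟩ := Nat.exists_eq_add_of_lt hab
    refine odd_val_ne_six_mul_sq hp hp5 ht a
      (p * (6 * q * x * (p ^ c * y) + q * r * p * (p ^ c * y) ^ 2) + 6 * x ^ 2) ?_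
      (by rw [← heq]; ring)
    rw [Nat.dvd_add_right (Dvd.intro _ rfl), hp.dvd_mul]
    rintro (h | h)
    exacts [h6 h, hx (hp.dvd_of_dvd_pow h)]
  · rw [hab]
  · exfalso
    obtain ⟨c, rfl⟩ := Nat.exists_eq_add_of_lt hab
    refine odd_val_ne_six_mul_sq hp hp5 ht b
      (p * (6 * p * (p ^ c * x) ^ 2 + 6 * q * (p ^ c * x) * y) + q * r * y ^ 2) ?_
      (by rw [← heq]; ring)
    rw [Nat.dvd_add_right (Dvd.intro _ rfl), hp.dvd_mul, hp.dvd_mul]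
    rintro ((h | h) | h)
    exacts [hq h, hr h, hy (hp.dvd_of_dvd_pow h)]
end

section
/- Let p be a prime with p ≡ 5 (mod 12) or p ≡ 7 (mod 12). Then there exist no p positive integers which are consecutive terms of an arithmetic progression and whose sum of squares is a perfect square. Precisely: for all positive integers n, d, there is no positive integer t with Σ_{i=0}^{p−1} (n + i·d)² = t². -/
/-!
With `M = 2n + (p - 1)d` (twice the mean of the progression), the sum of squares `S` satisfies
`12 S = p (3 M² + (p² - 1) d²)`. If `S = t²`, then `p ∣ t`, and dividing by `p` gives
`3 M² ≡ d² (mod p)`. By quadratic reciprocity `3` is a non-residue modulo `p` when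
`p ≡ 5, 7 (mod 12)`, so `p` divides both `M` and `d`. Then `(M / p, d / p, t / p)` satisfies the
same homogeneous equation, and infinite descent on `d` forces `d = 0`.
-/

lemma twelve_mul_sum_sq_ap (p : ℕ) (n d : ℤ) :
    12 * ∑ i ∈ Finset.range p, (n + i * d) ^ 2 =
      p * (3 * (2 * n + (p - 1) * d) ^ 2 + ((p : ℤ) ^ 2 - 1) * d ^ 2) := by
  induction p with
  | zero => simp
  | succ k ih =>
    rw [Finset.sum_range_succ, mul_add, ih]
    push_cast
    ring

lemma not_isSquare_three {p : ℕ} [Fact p.Prime] (h : p % 12 = 5 ∨ p % 12 = 7) :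
    ¬ IsSquare (3 : ZMod p) := by
  have h2 : ¬ IsSquare (2 : ZMod 3) := by decide
  have : Fact (Nat.Prime 3) := ⟨Nat.prime_three⟩
  rcases h with h | h
  · have key := ZMod.exists_sq_eq_prime_iff_of_mod_four_eq_one (p := p) (q := 3)
      (by omega) (by norm_num)
    have hp3 : (p : ZMod 3) = 2 := by
      have : ((p : ℕ) : ZMod 3) = ((2 : ℕ) : ZMod 3) :=
        (ZMod.natCast_eq_natCast_iff' p 2 3).2 (by omega)
      exact_mod_cast this
    rw [hp3] at key
    intro hs
    exact h2 (key.1 (by exact_mod_cast hs))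
  · have key := ZMod.exists_sq_eq_prime_iff_of_mod_four_eq_three (p := p) (q := 3)
      (by omega) (by norm_num) (by omega)
    have hp3 : (p : ZMod 3) = 1 := by
      have : ((p : ℕ) : ZMod 3) = ((1 : ℕ) : ZMod 3) :=
        (ZMod.natCast_eq_natCast_iff' p 1 3).2 (by omega)
      exact_mod_cast this
    rw [hp3] at key
    intro hs
    exact key.1 (by exact_mod_cast hs) IsSquare.one

/-- The form `3 M² - d²` is anisotropic modulo `p` when `3` is a non-residue. -/
lemma dvd_of_three_mul_sq {p : ℕ} [Fact p.Prime] (h3 : ¬ IsSquare (3 : ZMod p)) {M d : ℤ}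
    (h : (p : ℤ) ∣ 3 * M ^ 2 - d ^ 2) : (p : ℤ) ∣ M ∧ (p : ℤ) ∣ d := by
  rw [← ZMod.intCast_zmod_eq_zero_iff_dvd] at h
  push_cast at h
  have hM : (M : ZMod p) = 0 := by
    by_contra hM
    refine h3 ⟨(d : ZMod p) / M, ?_⟩
    field_simp
    linear_combination h
  have hd : (d : ZMod p) = 0 := by
    rw [hM] at h
    simpa using h
  exact ⟨(ZMod.intCast_zmod_eq_zero_iff_dvd M p).1 hM, (ZMod.intCast_zmod_eq_zero_iff_dvd d p).1 hd⟩

/-- Infinite descent on `d`. -/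
lemma descent {p : ℕ} (hp : p.Prime) (h : p % 12 = 5 ∨ p % 12 = 7) (d : ℕ) :
    ∀ M t : ℤ, 12 * t ^ 2 = p * (3 * M ^ 2 + ((p : ℤ) ^ 2 - 1) * (d : ℤ) ^ 2) → d = 0 := by
  have : Fact p.Prime := ⟨hp⟩
  have hpZ : Prime (p : ℤ) := Nat.prime_iff_prime_int.1 hp
  induction d using Nat.strong_induction_on with
  | _ d ih =>
    intro M t heq
    have ht : (p : ℤ) ∣ t := by
      rcases hpZ.dvd_or_dvd (Dvd.intro _ heq.symm) with h12 | ht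
      · have h12' : p ∣ 12 := by exact_mod_cast h12
        have hle := Nat.le_of_dvd (by norm_num) h12'
        obtain rfl | rfl : p = 5 ∨ p = 7 := by omega
        all_goals omega
      · exact hpZ.dvd_of_dvd_pow ht
    obtain ⟨s, rfl⟩ := ht
    have heq2 : 12 * p * s ^ 2 = 3 * M ^ 2 + ((p : ℤ) ^ 2 - 1) * (d : ℤ) ^ 2 :=
      mul_left_cancel₀ hpZ.ne_zero (by linear_combination heq)
    obtain ⟨⟨M', rfl⟩, hd⟩ := dvd_of_three_mul_sq (not_isSquare_three h) (M := M) (d := d)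
      ⟨12 * s ^ 2 - p * (d : ℤ) ^ 2, by linear_combination -heq2⟩
    obtain ⟨d', rfl⟩ : p ∣ d := by exact_mod_cast hd
    have heq3 : 12 * s ^ 2 = p * (3 * M' ^ 2 + ((p : ℤ) ^ 2 - 1) * (d' : ℤ) ^ 2) := by
      refine mul_left_cancel₀ hpZ.ne_zero ?_
      push_cast at heq2
      linear_combination heq2
    rcases Nat.eq_zero_or_pos d' with h0 | hpos
    · simp [h0]
    · have hlt : d' < p * d' := lt_mul_of_one_lt_left hpos hp.one_lt
      exact absurd (ih d' hlt M' s heq3) hpos.ne'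

theorem sum_sq_p_ap_not_square_of_five_or_seven_mod_twelve (p : ℕ) (hp : p.Prime)
    (h : p % 12 = 5 ∨ p % 12 = 7) (n d : ℕ) (hn : 0 < n) (hd : 0 < d) :
    ¬ ∃ t : ℕ, 0 < t ∧ ∑ i ∈ Finset.range p, (n + i * d) ^ 2 = t ^ 2 := by
  rintro ⟨t, -, ht⟩
  have htZ : ∑ i ∈ Finset.range p, ((n : ℤ) + i * d) ^ 2 = (t : ℤ) ^ 2 := by exact_mod_cast ht
  have key := twelve_mul_sum_sq_ap p n d
  rw [htZ] at key
  exact hd.ne' (descent hp h d _ _ key)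
end
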